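/- Suppose the DMC admits inputs x₀, x₁ ∈ 𝒳 and an output y* ∈ 𝒴 with Γ_{Y|X}(y*|x₀) > 0 and Γ_{Y|X}(y*|x₁) = 0. Then for every ε ∈ [0,1), the Stein-exponent with sublinear channel uses equals θ*_sublin(ε) = min{ D(π_{UV} ‖ Q_{UV}) : π_{UV} a pmf on 𝒰×𝒱 with marginals π_U = P_U and π_V = P_V }. -/

import Mathlib

open Filter

/-- Base-2 Kullback–Leibler divergence between two pmfs on a finite alphabet. -/
noncomputable def klDiv2 {A : Type} [Fintype A] (p q : A → ℝ) : ℝ :=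
  ∑ a, p a * Real.logb 2 (p a / q a)

/-- `p` is a probability mass function on the finite alphabet `A`. -/
def IsPMF {A : Type} [Fintype A] (p : A → ℝ) : Prop :=
  (∀ a, 0 ≤ p a) ∧ ∑ a, p a = 1

/-- `𝒰`-marginal of a joint pmf on `U × V`. -/
noncomputable def margU {U V : Type} [Fintype U] [Fintype V] (p : U × V → ℝ) (u : U) : ℝ :=
  ∑ v, p (u, v)

/-- `𝒱`-marginal of a joint pmf on `U × V`. -/
noncomputable def margV {U V : Type} [Fintype U] [Fintype V] (p : U × V → ℝ) (v : V) : ℝ :=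
  ∑ u, p (u, v)

/-- Probability, under source law `R` (i.i.d. over `n` samples) and DMC `Γ`
(memoryless over `k` uses, input `f u`), that the decision `g v y` equals `b`.
Here `b = true` encodes `Ĥ = 1` and `b = false` encodes `Ĥ = 0`. -/
noncomputable def decProb {U V X Y : Type} [Fintype U] [Fintype V] [Fintype X] [Fintype Y]
    (R : U × V → ℝ) (Γ : X → Y → ℝ) {n k : ℕ}
    (f : (Fin n → U) → Fin k → X) (g : (Fin n → V) → (Fin k → Y) → Bool) (b : Bool) : ℝ :=
  ∑ u : Fin n → U, ∑ v : Fin n → V, ∑ y : Fin k → Y,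
    (∏ i, R (u i, v i)) * (∏ j, Γ (f u j) (y j)) * (if g v y = b then 1 else 0)

/-- The set of `ε`-achievable type-II (miss-detection) error exponents with a
sublinear number of channel uses. -/
noncomputable def steinSetSublin {U V X Y : Type} [Fintype U] [Fintype V] [Fintype X] [Fintype Y]
    (P Q : U × V → ℝ) (Γ : X → Y → ℝ) (ε : ℝ) : Set ℝ :=
  {θ | 0 < θ ∧ ∃ (k : ℕ → ℕ)
      (f : ∀ n, (Fin n → U) → Fin (k n) → X)
      (g : ∀ n, (Fin n → V) → (Fin (k n) → Y) → Bool),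
      Tendsto (fun n => (k n : ℝ)) atTop atTop ∧
      Tendsto (fun n => (k n : ℝ) / (n : ℝ)) atTop (nhds 0) ∧
      limsup (fun n : ℕ => decProb P Γ (f n) (g n) true) atTop ≤ ε ∧
      θ ≤ liminf (fun n : ℕ => -(1 / (n : ℝ)) * Real.logb 2 (decProb Q Γ (f n) (g n) false)) atTop}

/-- Minimum of `D(π‖Q)` over all pmfs `π` on `U × V` with prescribed marginals. -/
noncomputable def minDivMarg {U V : Type} [Fintype U] [Fintype V]
    (Q : U × V → ℝ) (pU : U → ℝ) (pV : V → ℝ) : ℝ :=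
  sInf {d | ∃ π : U × V → ℝ, IsPMF π ∧
    (∀ u, margU π u = pU u) ∧ (∀ v, margV π v = pV v) ∧ d = klDiv2 π Q}

/-!
Converse: for fixed channel output `y`, the acceptance probability is a bilinear form
`∑ u v, Q (u, v) * φ u * ψ v` in `[0, 1]`-valued functions. Let
`M_r φ = (∑ u, pU u * φ u ^ (1 / r)) ^ r` with `pU` the marginal of `P`, and likewise for `ψ`. If
`π` has the marginals of `P` and `c < 2 ^ (-D(π‖Q))`, then for large `r` the reverse Hölder
inequality `c * (M_r φ * M_r ψ) ≤ ∑ u v, Q (u, v) * φ u * ψ v` holds for all nonnegative `φ` and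
`ψ`: as `r → ∞` the power means decrease, uniformly on compact sets by Dini's theorem, to geometric
means, for which the inequality with `c = 2 ^ (-D(π‖Q))` is Jensen's. Such inequalities tensorize,
so the `n`-fold product of `Q` satisfies one with constant `c ^ n` and the same `r`. Under `P`, one
of the `|Y| ^ k` outputs is accepted with probability at least `(1 - ε') / |Y| ^ k`, where
`ε < ε' < 1`, and this bounds both means from below by `2 ^ (-o(n))` because `k = o(n)`.

Achievability: the encoder repeats `x₀` if it sees a typical sequence and `x₁` otherwise, so that a
single `ystar` at the output certifies that `u` is typical. The decoder accepts iff `v` is typical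
and `ystar` is seen. Under `Q` the error event forces the joint type to have marginals close to
those of `P`; Sanov's bound and compactness of the simplex give the exponent.
-/

open scoped Finset Topology

section PMF

variable {α : Type} [Fintype α] {p q : α → ℝ}

lemma IsPMF.nonempty (hp : IsPMF p) : Nonempty α := by
  by_contra h
  rw [not_nonempty_iff] at h
  simpa using hp.2

lemma IsPMF.le_one (hp : IsPMF p) (a : α) : p a ≤ 1 :=
  hp.2 ▸ Finset.single_le_sum (fun b _ => hp.1 b) (Finset.mem_univ a)

lemma IsPMF.pi {ι : Type} [Fintype ι] [DecidableEq ι] {p : ι → α → ℝ} (hp : ∀ i, IsPMF (p i)) :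
    IsPMF fun w : ι → α => ∏ i, p i (w i) := by
  refine ⟨fun w => Finset.prod_nonneg fun i _ => (hp i).1 _, ?_⟩
  rw [← Fintype.prod_sum]
  exact Finset.prod_eq_one fun i _ => (hp i).2

lemma two_rpow_neg_klDiv2 (hp : ∀ a, 0 ≤ p a) (hq : ∀ a, 0 < q a) :
    (2 : ℝ) ^ (-klDiv2 p q) = ∏ a, (q a / p a) ^ p a := by
  rw [klDiv2, ← Finset.sum_neg_distrib, Real.rpow_sum_of_pos two_pos]
  refine Finset.prod_congr rfl fun a _ => ?_
  rcases (hp a).eq_or_lt with h | h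
  · simp [← h]
  · rw [← mul_neg, ← Real.logb_inv, inv_div, mul_comm, Real.rpow_mul two_pos.le,
      Real.rpow_logb two_pos (by norm_num) (div_pos (hq a) h)]

/-- Jensen's inequality for the logarithm, i.e. the easy half of the Gibbs (Donsker–Varadhan)
variational formula for `klDiv2 p q`. -/
lemma two_rpow_neg_klDiv2_mul_prod_rpow_le (hp : IsPMF p) (hq : ∀ a, 0 < q a) {f : α → ℝ}
    (hf : ∀ a, 0 ≤ f a) :
    (2 : ℝ) ^ (-klDiv2 p q) * ∏ a, f a ^ p a ≤ ∑ a, q a * f a := by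
  have hratio (a : α) : 0 ≤ q a / p a := div_nonneg (hq a).le (hp.1 a)
  calc (2 : ℝ) ^ (-klDiv2 p q) * ∏ a, f a ^ p a = ∏ a, (q a / p a * f a) ^ p a := by
        rw [two_rpow_neg_klDiv2 hp.1 hq, ← Finset.prod_mul_distrib]
        exact Finset.prod_congr rfl fun a _ => (Real.mul_rpow (hratio a) (hf a)).symm
    _ ≤ ∑ a, p a * (q a / p a * f a) :=
        Real.geom_mean_le_arith_mean_weighted _ _ _ (fun a _ => hp.1 a) hp.2
          fun a _ => mul_nonneg (hratio a) (hf a)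
    _ ≤ ∑ a, q a * f a := Finset.sum_le_sum fun a _ => by
        rcases (hp.1 a).eq_or_lt with h | h
        · simpa [← h] using mul_nonneg (hq a).le (hf a)
        · rw [← mul_assoc, mul_div_cancel₀ _ h.ne']

lemma klDiv2_nonneg (hp : IsPMF p) (hq : IsPMF q) (hqpos : ∀ a, 0 < q a) : 0 ≤ klDiv2 p q := by
  have h := two_rpow_neg_klDiv2_mul_prod_rpow_le hp hqpos (f := 1) fun _ => zero_le_one
  simp only [Pi.one_apply, Real.one_rpow, Finset.prod_const_one, mul_one, hq.2] at h
  rw [Real.rpow_le_one_iff_of_pos two_pos] at h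
  norm_num at h
  exact h

lemma continuous_klDiv2_left (hq : ∀ a, 0 < q a) : Continuous fun p : α → ℝ => klDiv2 p q := by
  have h (p : α → ℝ) : klDiv2 p q =
      ∑ a, q a / Real.log 2 * (p a / q a * Real.log (p a / q a)) :=
    Finset.sum_congr rfl fun a _ => by
      have := (hq a).ne'
      rw [Real.logb]
      field_simp
  simp only [h]
  exact continuous_finsetSum _ fun a _ => continuous_const.mul
    (Real.continuous_mul_log.comp ((continuous_apply a).div_const _))

end PMF

section Marginals

variable {U V : Type} [Fintype U] [Fintype V] {R : U × V → ℝ}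

lemma isPMF_margU (hR : IsPMF R) : IsPMF (margU R) :=
  ⟨fun _ => Finset.sum_nonneg fun _ _ => hR.1 _, by simpa [margU, Fintype.sum_prod_type] using hR.2⟩

lemma isPMF_margV (hR : IsPMF R) : IsPMF (margV R) :=
  ⟨fun _ => Finset.sum_nonneg fun _ _ => hR.1 _,
    by simpa [margV, Fintype.sum_prod_type_right] using hR.2⟩

lemma sum_sum_prod_mul_fst {n : ℕ} (φ : (Fin n → U) → ℝ) :
    ∑ u, ∑ v : Fin n → V, (∏ i, R (u i, v i)) * φ u = ∑ u, (∏ i, margU R (u i)) * φ u := by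
  simp only [← Finset.sum_mul, margU, Fintype.prod_sum]

lemma sum_sum_prod_mul_snd {n : ℕ} (ψ : (Fin n → V) → ℝ) :
    ∑ u : Fin n → U, ∑ v, (∏ i, R (u i, v i)) * ψ v = ∑ v, (∏ i, margV R (v i)) * ψ v := by
  rw [Finset.sum_comm]
  simp only [← Finset.sum_mul, margV, Fintype.prod_sum]

lemma sum_pi_prod_eq {n : ℕ} (F : (Fin n → U × V) → ℝ) :
    ∑ w, F w = ∑ u : Fin n → U, ∑ v : Fin n → V, F fun i => (u i, v i) := by
  rw [← (Equiv.arrowProdEquivProdArrow (Fin n) (fun _ => U) (fun _ => V)).symm.sum_comp,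
    Fintype.sum_prod_type]
  rfl

lemma sum_sum_prod_eq_one (hR : IsPMF R) (n : ℕ) :
    ∑ u : Fin n → U, ∑ v : Fin n → V, ∏ i, R (u i, v i) = 1 := by
  rw [← sum_pi_prod_eq fun w => ∏ i, R (w i)]
  exact (IsPMF.pi fun _ => hR).2

end Marginals

section PowerMean

variable {α : Type} [Fintype α] {p f : α → ℝ}

/-- The power mean of `f` of exponent `1 / r` with weights `p`, that is the `L^(1/r)`-quasinorm of
`f`. It decreases to the geometric mean `∏ a, f a ^ p a` as `r → ∞`. -/
noncomputable def powerMean (p : α → ℝ) (r : ℕ) (f : α → ℝ) : ℝ :=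
  (∑ a, p a * f a ^ (r : ℝ)⁻¹) ^ r

lemma sum_mul_rpow_nonneg (hp : ∀ a, 0 ≤ p a) (hf : ∀ a, 0 ≤ f a) (s : ℝ) :
    0 ≤ ∑ a, p a * f a ^ s :=
  Finset.sum_nonneg fun a _ => mul_nonneg (hp a) (Real.rpow_nonneg (hf a) s)

lemma powerMean_nonneg (hp : ∀ a, 0 ≤ p a) (hf : ∀ a, 0 ≤ f a) (r : ℕ) : 0 ≤ powerMean p r f :=
  pow_nonneg (sum_mul_rpow_nonneg hp hf _) r

lemma powerMean_smul {M : ℝ} (hM : 0 ≤ M) (hf : ∀ a, 0 ≤ f a) {r : ℕ} (hr : r ≠ 0) :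
    powerMean p r (M • f) = M * powerMean p r f := by
  have hterm (a : α) : p a * (M • f) a ^ (r : ℝ)⁻¹ = M ^ (r : ℝ)⁻¹ * (p a * f a ^ (r : ℝ)⁻¹) := by
    rw [Pi.smul_apply, smul_eq_mul, Real.mul_rpow hM (hf a), mul_left_comm]
  simp only [powerMean, hterm, ← Finset.mul_sum, mul_pow, Real.rpow_inv_natCast_pow hM hr]

lemma pow_sum_le_powerMean (hp : ∀ a, 0 ≤ p a) (hf0 : ∀ a, 0 ≤ f a) (hf1 : ∀ a, f a ≤ 1) {r : ℕ}
    (hr : r ≠ 0) : (∑ a, p a * f a) ^ r ≤ powerMean p r f := by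
  refine pow_le_pow_left₀ (Finset.sum_nonneg fun a _ => mul_nonneg (hp a) (hf0 a))
    (Finset.sum_le_sum fun a _ => mul_le_mul_of_nonneg_left ?_ (hp a)) r
  refine Real.self_le_rpow_of_le_one (hf0 a) (hf1 a) ?_
  exact inv_le_one_of_one_le₀ (by exact_mod_cast Nat.one_le_iff_ne_zero.2 hr)

lemma powerMean_le_powerMean (hp : IsPMF p) (hf : ∀ a, 0 ≤ f a) {r s : ℕ} (hr : r ≠ 0)
    (hrs : r ≤ s) : powerMean p s f ≤ powerMean p r f := by
  have hr0 : (0 : ℝ) < r := by positivity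
  have hs0 : (0 : ℝ) < s := hr0.trans_le (by exact_mod_cast hrs)
  have hmean := Real.arith_mean_le_rpow_mean Finset.univ p (fun a => f a ^ (s : ℝ)⁻¹)
    (fun a _ => hp.1 a) hp.2 (fun a _ => Real.rpow_nonneg (hf a) _) (p := s / r)
    ((one_le_div hr0).2 (by exact_mod_cast hrs))
  have hexp (a : α) : (f a ^ (s : ℝ)⁻¹) ^ ((s : ℝ) / r) = f a ^ (r : ℝ)⁻¹ := by
    rw [← Real.rpow_mul (hf a)]
    congr 1
    field_simp
  simp only [hexp] at hmean
  calc powerMean p s f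
      ≤ ((∑ a, p a * f a ^ (r : ℝ)⁻¹) ^ (1 / ((s : ℝ) / r))) ^ s :=
        pow_le_pow_left₀ (sum_mul_rpow_nonneg hp.1 hf _) hmean s
    _ = powerMean p r f := by
        rw [powerMean, ← Real.rpow_mul_natCast (sum_mul_rpow_nonneg hp.1 hf _), ← Real.rpow_natCast]
        congr 1
        field_simp

lemma prod_rpow_le_powerMean (hp : IsPMF p) (hf : ∀ a, 0 ≤ f a) {r : ℕ} (hr : r ≠ 0) :
    ∏ a, f a ^ p a ≤ powerMean p r f := by
  have hroot (a : α) : f a ^ p a = ((f a ^ (r : ℝ)⁻¹) ^ p a) ^ r := by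
    rw [← Real.rpow_mul_natCast (Real.rpow_nonneg (hf a) _), mul_comm,
      Real.rpow_mul (Real.rpow_nonneg (hf a) _), Real.rpow_natCast,
      Real.rpow_inv_natCast_pow (hf a) hr]
  simp only [hroot, Finset.prod_pow]
  exact pow_le_pow_left₀
    (Finset.prod_nonneg fun a _ => Real.rpow_nonneg (Real.rpow_nonneg (hf a) _) _)
    (Real.geom_mean_le_arith_mean_weighted _ _ _ (fun a _ => hp.1 a) hp.2
      fun a _ => Real.rpow_nonneg (hf a) _) r

lemma tendsto_exp_mul_rpow_inv_sub_one {x : ℝ} (hx : 0 ≤ x) :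
    Tendsto (fun r : ℕ => Real.exp (r * (x ^ (r : ℝ)⁻¹ - 1))) atTop (𝓝 x) := by
  rcases hx.eq_or_lt with rfl | hx
  · have h : Tendsto (fun r : ℕ => Real.exp (-(r : ℝ))) atTop (𝓝 0) :=
      Real.tendsto_exp_neg_atTop_nhds_zero.comp tendsto_natCast_atTop_atTop
    refine h.congr' ?_
    filter_upwards [eventually_ne_atTop 0] with r hr
    rw [Real.zero_rpow (by positivity)]
    ring_nf
  · have hinv : Tendsto (fun r : ℕ => (r : ℝ)⁻¹) atTop (𝓝[>] 0) :=
      tendsto_inv_atTop_nhdsGT_zero.comp tendsto_natCast_atTop_atTop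
    have h := (Real.continuous_exp.tendsto _).comp ((tendsto_rpow_sub_one_log hx).comp hinv)
    rw [Real.exp_log hx] at h
    simpa [Function.comp_def] using h

lemma powerMean_le_prod_rpow (hp : IsPMF p) (hf : ∀ a, 0 ≤ f a) (r : ℕ) :
    powerMean p r f ≤ ∏ a, Real.exp (r * (f a ^ (r : ℝ)⁻¹ - 1)) ^ p a := by
  have hsum : ∑ a, p a * f a ^ (r : ℝ)⁻¹ = ∑ a, p a * (f a ^ (r : ℝ)⁻¹ - 1) + 1 := by
    simp only [mul_sub, mul_one, Finset.sum_sub_distrib, hp.2, sub_add_cancel]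
  calc powerMean p r f
      ≤ Real.exp (∑ a, p a * (f a ^ (r : ℝ)⁻¹ - 1)) ^ r :=
        pow_le_pow_left₀ (sum_mul_rpow_nonneg hp.1 hf _) (hsum ▸ Real.add_one_le_exp _) r
    _ = ∏ a, Real.exp (r * (f a ^ (r : ℝ)⁻¹ - 1)) ^ p a := by
        simp only [← Real.exp_mul, ← Real.exp_sum, ← Real.exp_nat_mul, Finset.mul_sum]
        exact congrArg Real.exp (Finset.sum_congr rfl fun a _ => by ring)

lemma tendsto_powerMean (hp : IsPMF p) (hf : ∀ a, 0 ≤ f a) :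
    Tendsto (powerMean p · f) atTop (𝓝 (∏ a, f a ^ p a)) := by
  refine tendsto_of_tendsto_of_tendsto_of_le_of_le' tendsto_const_nhds
    (tendsto_finsetProd _ fun a _ =>
      (tendsto_exp_mul_rpow_inv_sub_one (hf a)).rpow_const (Or.inr (hp.1 a)))
    ?_ (Eventually.of_forall (powerMean_le_prod_rpow hp hf))
  filter_upwards [eventually_ne_atTop 0] with r hr using prod_rpow_le_powerMean hp hf hr

lemma tendstoUniformlyOn_powerMean (hp : IsPMF p) :
    TendstoUniformlyOn (fun r => powerMean p (r + 1)) (fun f => ∏ a, f a ^ p a) atTop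
      (Set.Icc 0 1) := by
  refine Antitone.tendstoUniformlyOn_of_forall_tendsto isCompact_Icc (fun r => ?_)
    (fun f hf r s hrs => powerMean_le_powerMean hp hf.1 r.succ_ne_zero (by lia)) ?_
    (fun f hf => (tendsto_powerMean hp hf.1).comp (tendsto_add_atTop_nat 1))
  · exact (Continuous.pow (continuous_finsetSum _ fun a _ => continuous_const.mul
      ((continuous_apply a).rpow_const fun _ => Or.inr (by positivity))) _).continuousOn
  · exact (continuous_finsetProd _ fun a _ =>
      (continuous_apply a).rpow_const fun _ => Or.inr (hp.1 a)).continuousOn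

lemma prod_smul_rpow (hp : IsPMF p) {M : ℝ} (hM : 0 ≤ M) (hf : ∀ a, 0 ≤ f a) :
    ∏ a, (M • f) a ^ p a = M * ∏ a, f a ^ p a := by
  simp only [Pi.smul_apply, smul_eq_mul, Real.mul_rpow hM (hf _), Finset.prod_mul_distrib]
  rw [← Real.rpow_sum_of_nonneg hM fun a _ => hp.1 a, hp.2, Real.rpow_one]

lemma prod_rpow_le_norm (hp : IsPMF p) (hf : ∀ a, 0 ≤ f a) : ∏ a, f a ^ p a ≤ ‖f‖ := by
  calc ∏ a, f a ^ p a ≤ ∏ a, ‖f‖ ^ p a :=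
        Finset.prod_le_prod (fun a _ => Real.rpow_nonneg (hf a) _) fun a _ =>
          Real.rpow_le_rpow (hf a) ((le_abs_self _).trans (norm_le_pi_norm f a)) (hp.1 a)
    _ = ‖f‖ := by
        rw [← Real.rpow_sum_of_nonneg (norm_nonneg f) fun a _ => hp.1 a, hp.2, Real.rpow_one]

lemma eventually_powerMean_le (hp : IsPMF p) {η : ℝ} (hη : 0 < η) :
    ∀ᶠ r : ℕ in atTop, ∀ f : α → ℝ, (∀ a, 0 ≤ f a) →
      powerMean p r f ≤ ∏ a, f a ^ p a + η * ‖f‖ := by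
  have hunif := Metric.tendstoUniformlyOn_iff.1 (tendstoUniformlyOn_powerMean hp) η hη
  filter_upwards [(tendsto_sub_atTop_nat 1).eventually hunif, eventually_ge_atTop 1]
    with r hr hr1 f hf
  rw [Nat.sub_add_cancel hr1] at hr
  have hg0 (a : α) : 0 ≤ (‖f‖⁻¹ • f) a := mul_nonneg (inv_nonneg.2 (norm_nonneg f)) (hf a)
  have hg1 (a : α) : (‖f‖⁻¹ • f) a ≤ 1 :=
    inv_mul_le_one_of_le₀ ((le_abs_self _).trans (norm_le_pi_norm f a)) (norm_nonneg f)
  have hfg : f = ‖f‖ • ‖f‖⁻¹ • f := by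
    rcases eq_or_ne f 0 with h | h
    · simp [h]
    · rw [smul_inv_smul₀ (norm_ne_zero_iff.2 h)]
  have hdist := hr _ ⟨hg0, hg1⟩
  rw [dist_comm, Real.dist_eq] at hdist
  calc powerMean p r f = ‖f‖ * powerMean p r (‖f‖⁻¹ • f) := by
        conv_lhs => rw [hfg]
        exact powerMean_smul (norm_nonneg f) hg0 (by lia)
    _ ≤ ‖f‖ * (∏ a, (‖f‖⁻¹ • f) a ^ p a + η) := by
        gcongr
        linarith [le_of_abs_le hdist.le]
    _ = ∏ a, f a ^ p a + η * ‖f‖ := by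
        rw [mul_add, ← prod_smul_rpow hp (norm_nonneg f) hg0, ← hfg, mul_comm η]

end PowerMean

lemma sum_fin_succ_arrow {α : Type} [Fintype α] {n : ℕ} (F : (Fin (n + 1) → α) → ℝ) :
    ∑ w, F w = ∑ a, ∑ w : Fin n → α, F (Fin.cons a w) := by
  rw [← (Fin.consEquiv fun _ => α).sum_comp, Fintype.sum_prod_type]
  rfl

section ReverseHolder

variable {U V : Type} [Fintype U] [Fintype V]

/-- The reverse Hölder inequality with constant `c` and exponent `1 / r` for the bilinear form with
kernel `K`, relative to the weights `p` and `s`. It plays the role of a blowing-up lemma: by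
`IsReverseHolder.pi` it survives taking i.i.d. powers. -/
def IsReverseHolder (p : U → ℝ) (s : V → ℝ) (K : U → V → ℝ) (c : ℝ) (r : ℕ) : Prop :=
  ∀ (f : U → ℝ) (g : V → ℝ), (∀ u, 0 ≤ f u) → (∀ v, 0 ≤ g v) →
    c * (powerMean p r f * powerMean s r g) ≤ ∑ u, ∑ v, K u v * (f u * g v)

lemma prod_rpow_margU (π : U × V → ℝ) (hπ : ∀ w, 0 ≤ π w) {f : U → ℝ} (hf : ∀ u, 0 ≤ f u) :
    ∏ w, f w.1 ^ π w = ∏ u, f u ^ margU π u := by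
  rw [Fintype.prod_prod_type]
  exact Finset.prod_congr rfl fun u _ =>
    (Real.rpow_sum_of_nonneg (hf u) fun v _ => hπ (u, v)).symm

lemma prod_rpow_margV (π : U × V → ℝ) (hπ : ∀ w, 0 ≤ π w) {g : V → ℝ} (hg : ∀ v, 0 ≤ g v) :
    ∏ w, g w.2 ^ π w = ∏ v, g v ^ margV π v := by
  rw [Fintype.prod_prod_type_right]
  exact Finset.prod_congr rfl fun v _ =>
    (Real.rpow_sum_of_nonneg (hg v) fun u _ => hπ (u, v)).symm

lemma two_rpow_neg_klDiv2_mul_prod_rpow_marg_le {π Q : U × V → ℝ} (hπ : IsPMF π)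
    (hQ : ∀ w, 0 < Q w) {f : U → ℝ} {g : V → ℝ} (hf : ∀ u, 0 ≤ f u) (hg : ∀ v, 0 ≤ g v) :
    (2 : ℝ) ^ (-klDiv2 π Q) * ((∏ u, f u ^ margU π u) * ∏ v, g v ^ margV π v) ≤
      ∑ u, ∑ v, Q (u, v) * (f u * g v) := by
  have h := two_rpow_neg_klDiv2_mul_prod_rpow_le hπ hQ (f := fun w => f w.1 * g w.2)
    fun w => mul_nonneg (hf w.1) (hg w.2)
  simp only [Real.mul_rpow (hf _) (hg _), Finset.prod_mul_distrib, prod_rpow_margU π hπ.1 hf,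
    prod_rpow_margV π hπ.1 hg, Fintype.sum_prod_type] at h
  exact h

lemma norm_le_sum {α : Type} [Fintype α] {f : α → ℝ} (hf : ∀ a, 0 ≤ f a) : ‖f‖ ≤ ∑ a, f a :=
  (pi_norm_le_iff_of_nonneg (Finset.sum_nonneg fun a _ => hf a)).2 fun a => by
    rw [Real.norm_of_nonneg (hf a)]
    exact Finset.single_le_sum (fun b _ => hf b) (Finset.mem_univ a)

lemma mul_norm_mul_norm_le {K : U → V → ℝ} {q : ℝ} (hq0 : 0 ≤ q) (hq : ∀ u v, q ≤ K u v)
    {f : U → ℝ} {g : V → ℝ} (hf : ∀ u, 0 ≤ f u) (hg : ∀ v, 0 ≤ g v) :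
    q * (‖f‖ * ‖g‖) ≤ ∑ u, ∑ v, K u v * (f u * g v) := by
  calc q * (‖f‖ * ‖g‖) ≤ q * ((∑ u, f u) * ∑ v, g v) :=
        mul_le_mul_of_nonneg_left (mul_le_mul (norm_le_sum hf) (norm_le_sum hg) (norm_nonneg g)
          (Finset.sum_nonneg fun u _ => hf u)) hq0
    _ = ∑ u, ∑ v, q * (f u * g v) := by
        rw [Finset.sum_mul_sum]
        simp only [Finset.mul_sum]
    _ ≤ ∑ u, ∑ v, K u v * (f u * g v) := Finset.sum_le_sum fun u _ => Finset.sum_le_sum fun v _ =>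
        mul_le_mul_of_nonneg_right (hq u v) (mul_nonneg (hf u) (hg v))

lemma eventually_powerMean_mul_powerMean_le {p : U → ℝ} {s : V → ℝ} (hp : IsPMF p) (hs : IsPMF s)
    {η : ℝ} (hη : 0 < η) :
    ∀ᶠ r : ℕ in atTop, ∀ (f : U → ℝ) (g : V → ℝ), (∀ u, 0 ≤ f u) → (∀ v, 0 ≤ g v) →
      powerMean p r f * powerMean s r g ≤
        (∏ u, f u ^ p u) * (∏ v, g v ^ s v) + η * (‖f‖ * ‖g‖) := by
  set τ : ℝ := min 1 (η / 3)
  have hτ0 : 0 < τ := lt_min one_pos (by positivity)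
  have hτ1 : τ ≤ 1 := min_le_left _ _
  have hτη : 3 * τ ≤ η := by linarith [min_le_right 1 (η / 3)]
  filter_upwards [eventually_powerMean_le hp hτ0, eventually_powerMean_le hs hτ0]
    with r hU hV f g hf hg
  have hGf := prod_rpow_le_norm hp hf
  have hGg := prod_rpow_le_norm hs hg
  set Gf := ∏ u, f u ^ p u
  set Gg := ∏ v, g v ^ s v
  calc powerMean p r f * powerMean s r g ≤ (Gf + τ * ‖f‖) * (Gg + τ * ‖g‖) :=
        mul_le_mul (hU f hf) (hV g hg) (powerMean_nonneg hs.1 hg r)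
          ((powerMean_nonneg hp.1 hf r).trans (hU f hf))
    _ = Gf * Gg + τ * (Gf * ‖g‖ + ‖f‖ * Gg + τ * (‖f‖ * ‖g‖)) := by ring
    _ ≤ Gf * Gg + τ * (‖f‖ * ‖g‖ + ‖f‖ * ‖g‖ + 1 * (‖f‖ * ‖g‖)) := by gcongr
    _ = Gf * Gg + 3 * τ * (‖f‖ * ‖g‖) := by ring
    _ ≤ Gf * Gg + η * (‖f‖ * ‖g‖) := by gcongr

lemma exists_isReverseHolder {π Q : U × V → ℝ} (hπ : IsPMF π) (hQ : ∀ w, 0 < Q w) {c : ℝ}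
    (hc0 : 0 ≤ c) (hc : c < 2 ^ (-klDiv2 π Q)) :
    ∃ r ≠ 0, IsReverseHolder (margU π) (margV π) (fun u v => Q (u, v)) c r := by
  set D : ℝ := 2 ^ (-klDiv2 π Q)
  have hD : 0 < D := hc0.trans_lt hc
  obtain ⟨t, rfl⟩ : ∃ t, c = t * D := ⟨c / D, (div_mul_cancel₀ c hD.ne').symm⟩
  have ht0 : 0 ≤ t := nonneg_of_mul_nonneg_left hc0 hD
  have ht1 : 0 < 1 - t := by nlinarith
  have : Nonempty (U × V) := hπ.nonempty
  obtain ⟨w₀, hmin⟩ := Finite.exists_min Q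
  have hη : 0 < (1 - t) * Q w₀ / D := div_pos (mul_pos ht1 (hQ w₀)) hD
  obtain ⟨r, hmeans, hr⟩ := ((eventually_powerMean_mul_powerMean_le (isPMF_margU hπ)
    (isPMF_margV hπ) hη).and (eventually_ne_atTop 0)).exists
  refine ⟨r, hr, fun f g hf hg => ?_⟩
  have hgeom := two_rpow_neg_klDiv2_mul_prod_rpow_marg_le hπ hQ hf hg
  have hnorm := mul_norm_mul_norm_le (hQ w₀).le (fun u v => hmin (u, v)) hf hg
  set S := ∑ u, ∑ v, Q (u, v) * (f u * g v)
  set G := (∏ u, f u ^ margU π u) * ∏ v, g v ^ margV π v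
  calc t * D * (powerMean (margU π) r f * powerMean (margV π) r g)
      ≤ t * D * (G + (1 - t) * Q w₀ / D * (‖f‖ * ‖g‖)) :=
        mul_le_mul_of_nonneg_left (hmeans f g hf hg) hc0
    _ = t * (D * G) + t * ((1 - t) * (Q w₀ * (‖f‖ * ‖g‖))) := by field_simp
    _ ≤ t * S + 1 * ((1 - t) * S) := by
        have hN : 0 ≤ Q w₀ * (‖f‖ * ‖g‖) := by have := (hQ w₀).le; positivity
        gcongr
        linarith
    _ = S := by ring

lemma powerMean_fin_succ {p : U → ℝ} (hp : ∀ u, 0 ≤ p u) {n r : ℕ} (hr : r ≠ 0)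
    {f : (Fin (n + 1) → U) → ℝ} (hf : ∀ w, 0 ≤ f w) :
    powerMean (fun w => ∏ i, p (w i)) r f =
      powerMean p r fun u => powerMean (fun w => ∏ i, p (w i)) r fun w => f (Fin.cons u w) := by
  have hroot (u : U) : powerMean (fun w : Fin n → U => ∏ i, p (w i)) r (fun w => f (Fin.cons u w)) ^
      (r : ℝ)⁻¹ = ∑ w : Fin n → U, (∏ i, p (w i)) * f (Fin.cons u w) ^ (r : ℝ)⁻¹ :=
    Real.pow_rpow_inv_natCast (sum_mul_rpow_nonneg (fun w => Finset.prod_nonneg fun i _ => hp _)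
      (fun w => hf _) _) hr
  rw [powerMean, powerMean, sum_fin_succ_arrow]
  simp only [hroot, Fin.prod_univ_succ, Fin.cons_zero, Fin.cons_succ, mul_assoc, Finset.mul_sum]

variable {p : U → ℝ} {s : V → ℝ} {K : U → V → ℝ} {c : ℝ} {r : ℕ}

lemma IsReverseHolder.pi (h : IsReverseHolder p s K c r) (hp : ∀ u, 0 ≤ p u) (hs : ∀ v, 0 ≤ s v)
    (hK : ∀ u v, 0 ≤ K u v) (hc : 0 ≤ c) (hr : r ≠ 0) (n : ℕ) :
    IsReverseHolder (fun w : Fin n → U => ∏ i, p (w i)) (fun w : Fin n → V => ∏ i, s (w i))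
      (fun u v => ∏ i, K (u i) (v i)) (c ^ n) r := by
  induction n with
  | zero =>
    intro f g hf hg
    simp [powerMean, Real.rpow_inv_natCast_pow (hf _) hr, Real.rpow_inv_natCast_pow (hg _) hr]
  | succ n ih =>
    intro f g hf hg
    set F : U → ℝ := fun u => powerMean (fun w => ∏ i, p (w i)) r fun w => f (Fin.cons u w)
    set G : V → ℝ := fun v => powerMean (fun w => ∏ i, s (w i)) r fun w => g (Fin.cons v w)
    have hF (u : U) : 0 ≤ F u :=
      powerMean_nonneg (fun w => Finset.prod_nonneg fun i _ => hp _) (fun w => hf _) r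
    have hG (v : V) : 0 ≤ G v :=
      powerMean_nonneg (fun w => Finset.prod_nonneg fun i _ => hs _) (fun w => hg _) r
    rw [powerMean_fin_succ hp hr hf, powerMean_fin_succ hs hr hg]
    calc c ^ (n + 1) * (powerMean p r F * powerMean s r G)
        = c ^ n * (c * (powerMean p r F * powerMean s r G)) := by ring
      _ ≤ c ^ n * ∑ u, ∑ v, K u v * (F u * G v) := by
          gcongr
          exact h F G hF hG
      _ = ∑ u, ∑ v, K u v * (c ^ n * (F u * G v)) := by
          simp only [Finset.mul_sum, mul_left_comm (c ^ n)]
      _ ≤ ∑ u, ∑ v, K u v * ∑ u' : Fin n → U, ∑ v' : Fin n → V,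
            (∏ i, K (u' i) (v' i)) * (f (Fin.cons u u') * g (Fin.cons v v')) := by
          gcongr with u _ v _
          · exact hK u v
          · exact ih _ _ (fun _ => hf _) fun _ => hg _
      _ = ∑ u, ∑ v, (∏ i, K (u i) (v i)) * (f u * g v) := by
          simp only [sum_fin_succ_arrow, Fin.prod_univ_succ, Fin.cons_zero, Fin.cons_succ,
            Finset.mul_sum, mul_assoc]
          exact Finset.sum_congr rfl fun u _ => Finset.sum_comm

lemma IsReverseHolder.mul_pow_sum_le (h : IsReverseHolder p s K c r) (hp : ∀ u, 0 ≤ p u)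
    (hs : ∀ v, 0 ≤ s v) (hc : 0 ≤ c) (hr : r ≠ 0) {f : U → ℝ} {g : V → ℝ}
    (hf0 : ∀ u, 0 ≤ f u) (hf1 : ∀ u, f u ≤ 1) (hg0 : ∀ v, 0 ≤ g v) (hg1 : ∀ v, g v ≤ 1) :
    c * ((∑ u, p u * f u) ^ r * (∑ v, s v * g v) ^ r) ≤ ∑ u, ∑ v, K u v * (f u * g v) := by
  refine le_trans ?_ (h f g hf0 hg0)
  have hg : 0 ≤ ∑ v, s v * g v := Finset.sum_nonneg fun v _ => mul_nonneg (hs v) (hg0 v)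
  exact mul_le_mul_of_nonneg_left (mul_le_mul (pow_sum_le_powerMean hp hf0 hf1 hr)
    (pow_sum_le_powerMean hs hg0 hg1 hr) (pow_nonneg hg r) (powerMean_nonneg hp hf0 r)) hc

end ReverseHolder

section DecProb

variable {U V X Y : Type} [Fintype U] [Fintype V] [Fintype X] [Fintype Y]
  {R : U × V → ℝ} {Γ : X → Y → ℝ} {n k : ℕ}
  {f : (Fin n → U) → Fin k → X} {g : (Fin n → V) → (Fin k → Y) → Bool} {b : Bool}

lemma decProb_eq_sum_mul :
    decProb R Γ f g b = ∑ u, ∑ v, (∏ i, R (u i, v i)) *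
      ∑ y : Fin k → Y, (∏ j, Γ (f u j) (y j)) * if g v y = b then 1 else 0 := by
  simp only [decProb, Finset.mul_sum, mul_assoc]

lemma decProb_eq_sum_output :
    decProb R Γ f g b = ∑ y : Fin k → Y, ∑ u, ∑ v, (∏ i, R (u i, v i)) *
      ((∏ j, Γ (f u j) (y j)) * if g v y = b then 1 else 0) := by
  simp only [decProb, mul_assoc]
  exact (Finset.sum_congr rfl fun u _ => Finset.sum_comm).trans Finset.sum_comm

lemma decProb_nonneg (hR : ∀ w, 0 ≤ R w) (hΓ : ∀ x y, 0 ≤ Γ x y) : 0 ≤ decProb R Γ f g b :=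
  Finset.sum_nonneg fun u _ => Finset.sum_nonneg fun v _ => Finset.sum_nonneg fun y _ =>
    mul_nonneg (mul_nonneg (Finset.prod_nonneg fun i _ => hR _)
      (Finset.prod_nonneg fun j _ => hΓ _ _)) (by positivity)

lemma decProb_false_add_true (hR : IsPMF R) (hΓ : ∀ x, IsPMF (Γ x)) :
    decProb R Γ f g false + decProb R Γ f g true = 1 := by
  have hchannel (u : Fin n → U) : ∑ y : Fin k → Y, ∏ j, Γ (f u j) (y j) = 1 :=
    (IsPMF.pi fun j => hΓ (f u j)).2
  have hdec (v : Fin n → V) (y : Fin k → Y) :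
      (if g v y = false then (1 : ℝ) else 0) + (if g v y = true then 1 else 0) = 1 := by
    cases g v y <;> simp
  simp only [decProb_eq_sum_mul, ← Finset.sum_add_distrib, ← mul_add, hdec, mul_one, hchannel,
    sum_sum_prod_eq_one hR]

lemma decProb_le_one (hR : IsPMF R) (hΓ : ∀ x, IsPMF (Γ x)) : decProb R Γ f g b ≤ 1 := by
  have hsum := decProb_false_add_true (f := f) (g := g) hR hΓ
  have hnonneg (b : Bool) : 0 ≤ decProb R Γ f g b := decProb_nonneg hR.1 fun x => (hΓ x).1
  cases b <;> linarith [hnonneg false, hnonneg true]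

lemma neg_one_div_mul_logb_le_iff {β d : ℝ} (hn : n ≠ 0) (hβ : 0 < β) :
    -(1 / (n : ℝ)) * Real.logb 2 β ≤ d ↔ (2 : ℝ) ^ (-(n * d)) ≤ β := by
  have hn0 : (0 : ℝ) < n := by positivity
  rw [← Real.le_logb_iff_rpow_le one_lt_two hβ, neg_mul, neg_le, one_div, inv_mul_eq_div,
    le_div_iff₀ hn0, neg_mul, mul_comm]

lemma le_neg_one_div_mul_logb_iff {β d : ℝ} (hn : n ≠ 0) (hβ : 0 < β) :
    d ≤ -(1 / (n : ℝ)) * Real.logb 2 β ↔ β ≤ (2 : ℝ) ^ (-(n * d)) := by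
  have hn0 : (0 : ℝ) < n := by positivity
  rw [← Real.logb_le_iff_le_rpow one_lt_two hβ, neg_mul, le_neg, one_div, inv_mul_eq_div,
    div_le_iff₀ hn0, neg_mul, mul_comm]

lemma neg_one_div_mul_logb_decProb_nonneg (hR : IsPMF R) (hΓ : ∀ x, IsPMF (Γ x)) :
    0 ≤ -(1 / (n : ℝ)) * Real.logb 2 (decProb R Γ f g b) :=
  mul_nonneg_of_nonpos_of_nonpos (neg_nonpos.2 (by positivity))
    (Real.logb_nonpos one_lt_two (decProb_nonneg hR.1 fun x => (hΓ x).1) (decProb_le_one hR hΓ))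

end DecProb

section Converse

variable {U V X Y : Type} [Fintype U] [Fintype V] [Fintype X] [Fintype Y]
  {P Q : U × V → ℝ} {Γ : X → Y → ℝ}

lemma exists_output_le_of_le_decProb [Nonempty Y] {n k : ℕ} {f : (Fin n → U) → Fin k → X}
    {g : (Fin n → V) → (Fin k → Y) → Bool} {b : Bool} {δ : ℝ} (hδ : δ ≤ decProb P Γ f g b) :
    ∃ y : Fin k → Y, δ / Fintype.card Y ^ k ≤ ∑ u, ∑ v, (∏ i, P (u i, v i)) *
      ((∏ j, Γ (f u j) (y j)) * if g v y = b then 1 else 0) := by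
  rw [decProb_eq_sum_output] at hδ
  obtain ⟨y, -, hy⟩ := Finset.exists_le_of_sum_le (f := fun _ => δ / (Fintype.card Y : ℝ) ^ k)
    Finset.univ_nonempty (le_trans (by simp [mul_div_cancel₀]) hδ)
  exact ⟨y, hy⟩

/-- Once the channel output `y` is fixed, the acceptance probability is a bilinear form in a
function of `u` and a function of `v`. -/
lemma IsReverseHolder.le_decProb [Nonempty Y] {c : ℝ} {r : ℕ}
    (h : IsReverseHolder (margU P) (margV P) (fun u v => Q (u, v)) c r) (hc : 0 ≤ c) (hr : r ≠ 0)
    (hP : IsPMF P) (hQ : ∀ w, 0 ≤ Q w) (hΓ : ∀ x, IsPMF (Γ x)) {n k : ℕ}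
    {f : (Fin n → U) → Fin k → X} {g : (Fin n → V) → (Fin k → Y) → Bool} {b : Bool} {δ : ℝ}
    (hδ0 : 0 ≤ δ) (hδ : δ ≤ decProb P Γ f g b) :
    c ^ n * ((δ / Fintype.card Y ^ k) ^ r * (δ / Fintype.card Y ^ k) ^ r) ≤
      decProb Q Γ f g b := by
  obtain ⟨y, hy⟩ := exists_output_le_of_le_decProb hδ
  set φ : (Fin n → U) → ℝ := fun u => ∏ j, Γ (f u j) (y j)
  set ψ : (Fin n → V) → ℝ := fun v => if g v y = b then 1 else 0
  have hφ0 (u) : 0 ≤ φ u := Finset.prod_nonneg fun j _ => (hΓ _).1 _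
  have hφ1 (u) : φ u ≤ 1 := Finset.prod_le_one (fun j _ => (hΓ _).1 _) fun j _ => (hΓ _).le_one _
  have hψ0 (v) : 0 ≤ ψ v := by positivity
  have hψ1 (v) : ψ v ≤ 1 := by simp only [ψ]; split_ifs <;> norm_num
  have hPn (u : Fin n → U) (v : Fin n → V) : 0 ≤ ∏ i, P (u i, v i) :=
    Finset.prod_nonneg fun i _ => hP.1 _
  have hφ : δ / Fintype.card Y ^ k ≤ ∑ u, (∏ i, margU P (u i)) * φ u := by
    rw [← sum_sum_prod_mul_fst]
    exact hy.trans (Finset.sum_le_sum fun u _ => Finset.sum_le_sum fun v _ =>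
      mul_le_mul_of_nonneg_left (mul_le_of_le_one_right (hφ0 u) (hψ1 v)) (hPn u v))
  have hψ : δ / Fintype.card Y ^ k ≤ ∑ v, (∏ i, margV P (v i)) * ψ v := by
    rw [← sum_sum_prod_mul_snd]
    exact hy.trans (Finset.sum_le_sum fun u _ => Finset.sum_le_sum fun v _ =>
      mul_le_mul_of_nonneg_left (mul_le_of_le_one_left (hψ0 v) (hφ1 u)) (hPn u v))
  have hpi := h.pi (isPMF_margU hP).1 (isPMF_margV hP).1 (fun u v => hQ (u, v)) hc hr n
  calc _ ≤ c ^ n * ((∑ u, (∏ i, margU P (u i)) * φ u) ^ r *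
          (∑ v, (∏ i, margV P (v i)) * ψ v) ^ r) := by
        gcongr
        exact pow_nonneg ((by positivity : 0 ≤ δ / (Fintype.card Y : ℝ) ^ k).trans hφ) r
    _ ≤ ∑ u, ∑ v, (∏ i, Q (u i, v i)) * (φ u * ψ v) :=
        hpi.mul_pow_sum_le (IsPMF.pi fun _ => isPMF_margU hP).1 (IsPMF.pi fun _ => isPMF_margV hP).1
          (pow_nonneg hc n) hr hφ0 hφ1 hψ0 hψ1
    _ ≤ decProb Q Γ f g b := by
        rw [decProb_eq_sum_output]
        refine Finset.single_le_sum (f := fun y : Fin k → Y => ∑ u, ∑ v, (∏ i, Q (u i, v i)) *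
          ((∏ j, Γ (f u j) (y j)) * if g v y = b then 1 else 0))
          (fun y _ => ?_) (Finset.mem_univ y)
        exact Finset.sum_nonneg fun u _ => Finset.sum_nonneg fun v _ =>
          mul_nonneg (Finset.prod_nonneg fun i _ => hQ _)
            (mul_nonneg (Finset.prod_nonneg fun j _ => (hΓ _).1 _) (by positivity))

lemma eventually_two_rpow_neg_le_mul_pow {d d' M δ : ℝ} (hd : d' < d) (hM : 0 < M) (hδ : 0 < δ)
    (r : ℕ) {k : ℕ → ℕ} (hk : Tendsto (fun n => (k n : ℝ) / n) atTop (𝓝 0)) :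
    ∀ᶠ n : ℕ in atTop, (2 : ℝ) ^ (-(n * d)) ≤
      ((2 : ℝ) ^ (-d')) ^ n * ((δ / M ^ k n) ^ r * (δ / M ^ k n) ^ r) := by
  obtain ⟨a, rfl⟩ : ∃ a : ℝ, 2 ^ a = δ := ⟨_, Real.rpow_logb two_pos (by norm_num) hδ⟩
  obtain ⟨m, rfl⟩ : ∃ m : ℝ, 2 ^ m = M := ⟨_, Real.rpow_logb two_pos (by norm_num) hM⟩
  have hloss : Tendsto (fun n : ℕ => 2 * r * (m * ((k n : ℝ) / n) - a / n)) atTop (𝓝 0) := by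
    simpa using ((hk.const_mul m).sub (tendsto_const_div_atTop_nhds_zero_nat a)).const_mul
      (2 * (r : ℝ))
  filter_upwards [hloss.eventually_lt_const (sub_pos.2 hd), eventually_gt_atTop 0] with n hn hn0
  have hn0' : (0 : ℝ) < n := by exact_mod_cast hn0
  simp only [← Real.rpow_mul_natCast two_pos.le, ← Real.rpow_sub two_pos, ← Real.rpow_add two_pos]
  rw [Real.rpow_le_rpow_left_iff one_lt_two]
  have hmul := mul_le_mul_of_nonneg_right hn.le hn0'.le
  have hexpand : 2 * r * (m * ((k n : ℝ) / n) - a / n) * n = 2 * r * (m * k n - a) := by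
    field_simp
  linarith

lemma minDivMarg_le_klDiv2 (hQ : IsPMF Q) (hQpos : ∀ w, 0 < Q w) {π : U × V → ℝ} (hπ : IsPMF π) :
    minDivMarg Q (margU π) (margV π) ≤ klDiv2 π Q := by
  refine csInf_le ⟨0, ?_⟩ ⟨π, hπ, fun _ => rfl, fun _ => rfl, rfl⟩
  rintro _ ⟨π', hπ', -, -, rfl⟩
  exact klDiv2_nonneg hπ' hQ hQpos

lemma minDivMarg_nonneg (hQ : IsPMF Q) (hQpos : ∀ w, 0 < Q w) (pU : U → ℝ) (pV : V → ℝ) :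
    0 ≤ minDivMarg Q pU pV := by
  refine Real.sInf_nonneg ?_
  rintro _ ⟨π, hπ, -, -, rfl⟩
  exact klDiv2_nonneg hπ hQ hQpos

lemma exists_klDiv2_lt_of_minDivMarg_lt (hP : IsPMF P) {d : ℝ}
    (hd : minDivMarg Q (margU P) (margV P) < d) :
    ∃ π, IsPMF π ∧ margU π = margU P ∧ margV π = margV P ∧ klDiv2 π Q < d := by
  obtain ⟨_, ⟨π, hπ, hU, hV, rfl⟩, hπd⟩ :=
    exists_lt_of_csInf_lt (by exact ⟨_, P, hP, fun _ => rfl, fun _ => rfl, rfl⟩) hd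
  exact ⟨π, hπ, funext hU, funext hV, hπd⟩

theorem eventually_two_rpow_neg_le_decProb [Nonempty Y] (hP : IsPMF P) (hQpos : ∀ w, 0 < Q w)
    (hΓ : ∀ x, IsPMF (Γ x)) {d : ℝ} (hd : minDivMarg Q (margU P) (margV P) < d) {k : ℕ → ℕ}
    (hk : Tendsto (fun n => (k n : ℝ) / n) atTop (𝓝 0)) (f : ∀ n, (Fin n → U) → Fin (k n) → X)
    (g : ∀ n, (Fin n → V) → (Fin (k n) → Y) → Bool) {δ : ℝ} (hδ : 0 < δ) :
    ∀ᶠ n : ℕ in atTop, δ ≤ decProb P Γ (f n) (g n) false →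
      (2 : ℝ) ^ (-(n * d)) ≤ decProb Q Γ (f n) (g n) false := by
  obtain ⟨π, hπ, hπU, hπV, hπd⟩ := exists_klDiv2_lt_of_minDivMarg_lt hP hd
  obtain ⟨d', hd', hdd'⟩ := exists_between hπd
  obtain ⟨r, hr, hrev⟩ := exists_isReverseHolder hπ hQpos (Real.rpow_nonneg two_pos.le (-d'))
    (Real.rpow_lt_rpow_of_exponent_lt one_lt_two (neg_lt_neg hd'))
  rw [hπU, hπV] at hrev
  filter_upwards [eventually_two_rpow_neg_le_mul_pow (M := Fintype.card Y) hdd'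
    (by exact_mod_cast Fintype.card_pos) hδ r hk] with n hn hle
  exact hn.trans (hrev.le_decProb (by positivity) hr hP (fun w => (hQpos w).le) hΓ hδ.le hle)

theorem le_minDivMarg_of_mem_steinSetSublin [Nonempty Y] (hP : IsPMF P) (hQ : IsPMF Q)
    (hQpos : ∀ w, 0 < Q w) (hΓ : ∀ x, IsPMF (Γ x)) {ε θ : ℝ} (hε : ε < 1)
    (hθ : θ ∈ steinSetSublin P Q Γ ε) : θ ≤ minDivMarg Q (margU P) (margV P) := by
  obtain ⟨-, k, f, g, -, hk, hα, hβ⟩ := hθ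
  refine hβ.trans (le_of_forall_gt_imp_ge_of_dense fun d hd => ?_)
  obtain ⟨e, hεe, he1⟩ := exists_between hε
  have hαlt : ∀ᶠ n in atTop, decProb P Γ (f n) (g n) true < e :=
    eventually_lt_of_limsup_lt (hα.trans_lt hεe)
      (isBoundedUnder_of ⟨1, fun n => decProb_le_one hP hΓ⟩)
  refine liminf_le_of_frequently_le (Eventually.frequently ?_)
    (isBoundedUnder_of ⟨0, fun n => neg_one_div_mul_logb_decProb_nonneg hQ hΓ⟩)
  filter_upwards [hαlt, eventually_ne_atTop 0,
    eventually_two_rpow_neg_le_decProb hP hQpos hΓ hd hk f g (sub_pos.2 he1)] with n hn hn0 hconv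
  have hβle := hconv (by linarith [decProb_false_add_true (f := f n) (g := g n) hP hΓ])
  exact (neg_one_div_mul_logb_le_iff hn0 ((Real.rpow_pos_of_pos two_pos _).trans_le hβle)).2 hβle

end Converse

section EmpiricalDistribution

variable {α : Type} {n : ℕ} {p q : α → ℝ}

open Classical in
/-- The empirical distribution, or type, of the sequence `w`. -/
noncomputable def empDist (w : Fin n → α) (a : α) : ℝ :=
  #{i | w i = a} / n

open Classical in
lemma empDist_eq_sum_div (w : Fin n → α) (a : α) :
    empDist w a = (∑ i, if w i = a then 1 else 0) / n := by
  rw [empDist, Finset.sum_boole]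

lemma empDist_apply_pos (w : Fin n → α) (i : Fin n) : 0 < empDist w (w i) := by
  classical
  have : 0 < #{j | w j = w i} := Finset.card_pos.2 ⟨i, by simp⟩
  have : 0 < n := i.pos
  rw [empDist]
  positivity

variable [Fintype α]

/-- `w` is (strongly) typical for `p` with tolerance `δ`: its empirical distribution is within `δ`
of `p` in the sup norm. -/
def IsTypical (p : α → ℝ) (δ : ℝ) (w : Fin n → α) : Prop :=
  dist (empDist w) p ≤ δ

lemma isPMF_empDist (hn : n ≠ 0) (w : Fin n → α) : IsPMF (empDist w) := by
  classical
  refine ⟨fun a => div_nonneg (Nat.cast_nonneg _) (Nat.cast_nonneg _), ?_⟩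
  simp only [empDist_eq_sum_div, ← Finset.sum_div]
  rw [Finset.sum_comm]
  simp [hn]

lemma margU_empDist {U V : Type} [Fintype U] [Fintype V] (w : Fin n → U × V) :
    margU (empDist w) = empDist fun i => (w i).1 := by
  classical
  funext u
  simp only [margU, empDist_eq_sum_div, ← Finset.sum_div]
  rw [Finset.sum_comm]
  simp [Prod.ext_iff, ite_and]

lemma margV_empDist {U V : Type} [Fintype U] [Fintype V] (w : Fin n → U × V) :
    margV (empDist w) = empDist fun i => (w i).2 := by
  classical
  funext v
  simp only [margV, empDist_eq_sum_div, ← Finset.sum_div]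
  rw [Finset.sum_comm]
  simp [Prod.ext_iff, ite_and]

lemma sum_prod_mul_sum_sq (hp : IsPMF p) {h : α → ℝ} (hh : ∑ a, p a * h a = 0) (n : ℕ) :
    ∑ w : Fin n → α, (∏ i, p (w i)) * (∑ i, h (w i)) ^ 2 = n * ∑ a, p a * h a ^ 2 := by
  induction n with
  | zero => simp
  | succ n ih =>
    have hone : ∑ w : Fin n → α, ∏ i, p (w i) = 1 := (IsPMF.pi fun _ => hp).2
    have hexpand (a : α) : ∑ w : Fin n → α, p a * (∏ i, p (w i)) * (h a + ∑ i, h (w i)) ^ 2 =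
        p a * h a ^ 2 * ∑ w : Fin n → α, ∏ i, p (w i)
          + p a * h a * (2 * ∑ w : Fin n → α, (∏ i, p (w i)) * ∑ i, h (w i))
          + p a * ∑ w : Fin n → α, (∏ i, p (w i)) * (∑ i, h (w i)) ^ 2 := by
      simp only [Finset.mul_sum, ← Finset.sum_add_distrib]
      exact Finset.sum_congr rfl fun w _ => by simp only [← Finset.mul_sum]; ring
    simp only [sum_fin_succ_arrow, Fin.prod_univ_succ, Fin.sum_univ_succ, Fin.cons_zero,
      Fin.cons_succ, hexpand, Finset.sum_add_distrib, ← Finset.sum_mul, hh, hp.2, hone, ih]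
    push_cast
    ring

lemma sum_prod_mul_empDist_sub_sq_le (hp : IsPMF p) (hn : n ≠ 0) (a : α) :
    ∑ w : Fin n → α, (∏ i, p (w i)) * (empDist w a - p a) ^ 2 ≤ p a / n := by
  classical
  have hn0 : (n : ℝ) ≠ 0 := by exact_mod_cast hn
  set h : α → ℝ := fun b => (if b = a then 1 else 0) - p a
  have hmean : ∑ b, p b * h b = 0 := by
    simp [h, mul_sub, ← Finset.sum_mul, hp.2]
  have hvar : ∑ b, p b * h b ^ 2 ≤ p a := by
    have hsq (b : α) : p b * h b ^ 2 =
        (if b = a then p b else 0) * (1 - 2 * p a) + p b * p a ^ 2 := by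
      simp only [h]
      split_ifs <;> ring
    simp only [hsq, Finset.sum_add_distrib, ← Finset.sum_mul, hp.2, Finset.sum_ite_eq',
      Finset.mem_univ, if_true]
    nlinarith [sq_nonneg (p a)]
  have hemp (w : Fin n → α) : empDist w a - p a = (n : ℝ)⁻¹ * ∑ i, h (w i) := by
    simp only [h, Finset.sum_sub_distrib, empDist_eq_sum_div]
    simp
    field_simp
  calc ∑ w : Fin n → α, (∏ i, p (w i)) * (empDist w a - p a) ^ 2
      = (n : ℝ)⁻¹ ^ 2 * ∑ w : Fin n → α, (∏ i, p (w i)) * (∑ i, h (w i)) ^ 2 := by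
        simp only [hemp, mul_pow, mul_left_comm _ ((n : ℝ)⁻¹ ^ 2), ← Finset.mul_sum]
    _ = (∑ b, p b * h b ^ 2) / n := by
        rw [sum_prod_mul_sum_sq hp hmean]
        field_simp
    _ ≤ p a / n := by gcongr

open Classical in
lemma sum_prod_mul_not_isTypical_le (hp : IsPMF p) {δ : ℝ} (hδ : 0 < δ) (hn : n ≠ 0) :
    ∑ w : Fin n → α, (∏ i, p (w i)) * (if IsTypical p δ w then 0 else 1) ≤ 1 / (n * δ ^ 2) := by
  have hchebyshev (w : Fin n → α) :
      (if IsTypical p δ w then 0 else 1) ≤ ∑ a, (empDist w a - p a) ^ 2 / δ ^ 2 := by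
    split_ifs with hw
    · positivity
    · rw [IsTypical, dist_pi_le_iff hδ.le] at hw
      push Not at hw
      obtain ⟨a, ha⟩ := hw
      refine le_trans ?_ (Finset.single_le_sum (fun a _ => by positivity) (Finset.mem_univ a))
      rw [one_le_div (by positivity), ← sq_abs (empDist w a - p a), ← Real.dist_eq]
      gcongr
  calc ∑ w : Fin n → α, (∏ i, p (w i)) * (if IsTypical p δ w then 0 else 1)
      ≤ ∑ w : Fin n → α, (∏ i, p (w i)) * ∑ a, (empDist w a - p a) ^ 2 / δ ^ 2 :=
        Finset.sum_le_sum fun w _ => mul_le_mul_of_nonneg_left (hchebyshev w)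
          (Finset.prod_nonneg fun i _ => hp.1 _)
    _ = (∑ a, ∑ w : Fin n → α, (∏ i, p (w i)) * (empDist w a - p a) ^ 2) / δ ^ 2 := by
        simp only [Finset.mul_sum, Finset.sum_div, mul_div_assoc]
        exact Finset.sum_comm
    _ ≤ (∑ a, p a / n) / δ ^ 2 := by
        gcongr with a
        exact sum_prod_mul_empDist_sub_sq_le hp hn a
    _ = 1 / (n * δ ^ 2) := by rw [← Finset.sum_div, hp.2, div_div]

lemma prod_comp_eq_prod_rpow_empDist {F : α → ℝ} (hF : ∀ a, 0 ≤ F a) (hn : n ≠ 0)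
    (w : Fin n → α) : ∏ i, F (w i) = (∏ a, F a ^ empDist w a) ^ n := by
  classical
  have hn0 : (n : ℝ) ≠ 0 := by exact_mod_cast hn
  have hpow (a : α) : (F a ^ empDist w a) ^ n = F a ^ #{i | w i = a} := by
    rw [← Real.rpow_mul_natCast (hF a), empDist, div_mul_cancel₀ _ hn0, Real.rpow_natCast]
  simp only [← Finset.prod_pow, hpow, ← Finset.prod_const]
  exact (Finset.prod_fiberwise' _ _ _).symm

lemma prod_comp_eq_two_rpow_mul (hq : ∀ a, 0 < q a) (hn : n ≠ 0) (w : Fin n → α) :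
    ∏ i, q (w i) = (2 : ℝ) ^ (-(n * klDiv2 (empDist w) q)) * ∏ i, empDist w (w i) := by
  have hemp := (isPMF_empDist hn w).1
  rw [neg_mul_eq_mul_neg, mul_comm (n : ℝ), Real.rpow_mul_natCast two_pos.le,
    two_rpow_neg_klDiv2 hemp hq, ← prod_comp_eq_prod_rpow_empDist
      (fun a => div_nonneg (hq a).le (hemp a)) hn, ← Finset.prod_mul_distrib]
  exact Finset.prod_congr rfl fun i _ => (div_mul_cancel₀ _ (empDist_apply_pos w i).ne').symm

open Classical in
lemma card_image_empDist_le :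
    #(Finset.univ.image (empDist : (Fin n → α) → α → ℝ)) ≤ (n + 1) ^ Fintype.card α := by
  have hsub : Finset.univ.image (empDist : (Fin n → α) → α → ℝ) ⊆
      Finset.univ.image fun (c : α → Fin (n + 1)) a => (c a : ℝ) / n := by
    intro t ht
    obtain ⟨w, -, rfl⟩ := Finset.mem_image.1 ht
    have hcard (a : α) : #{i | w i = a} < n + 1 :=
      Nat.lt_succ_of_le ((Finset.card_le_univ _).trans_eq (Fintype.card_fin n))
    exact Finset.mem_image.2 ⟨fun a => ⟨_, hcard a⟩, Finset.mem_univ _, rfl⟩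
  simpa using (Finset.card_le_card hsub).trans Finset.card_image_le

lemma sum_prod_empDist_le (hn : n ≠ 0) :
    ∑ w : Fin n → α, ∏ i, empDist w (w i) ≤ ((n : ℝ) + 1) ^ Fintype.card α := by
  classical
  set T := Finset.univ.image (empDist : (Fin n → α) → α → ℝ)
  calc ∑ w : Fin n → α, ∏ i, empDist w (w i)
      = ∑ t ∈ T, ∑ w : Fin n → α with empDist w = t, ∏ i, empDist w (w i) :=
        (Finset.sum_fiberwise_of_maps_to (fun w hw => Finset.mem_image_of_mem _ hw) _).symm
    _ ≤ ∑ t ∈ T, 1 := Finset.sum_le_sum fun t ht => by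
        obtain ⟨w₀, -, rfl⟩ := Finset.mem_image.1 ht
        have hpi := IsPMF.pi fun _ : Fin n => isPMF_empDist hn w₀
        rw [← hpi.2]
        refine (Finset.sum_congr rfl fun w hw => ?_).trans_le
          (Finset.sum_le_sum_of_subset_of_nonneg (Finset.filter_subset _ _) fun w _ _ => hpi.1 w)
        rw [(Finset.mem_filter.1 hw).2]
    _ ≤ ((n : ℝ) + 1) ^ Fintype.card α := by
        rw [Finset.sum_const, nsmul_one]
        exact_mod_cast card_image_empDist_le

lemma sanov_upper_bound (hq : ∀ a, 0 < q a) (hn : n ≠ 0) {θ : ℝ} {S : Finset (Fin n → α)}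
    (hS : ∀ w ∈ S, θ ≤ klDiv2 (empDist w) q) :
    ∑ w ∈ S, ∏ i, q (w i) ≤ ((n : ℝ) + 1) ^ Fintype.card α * 2 ^ (-(n * θ)) := by
  have hemp (w : Fin n → α) : 0 ≤ ∏ i, empDist w (w i) :=
    Finset.prod_nonneg fun i _ => (empDist_apply_pos w i).le
  calc ∑ w ∈ S, ∏ i, q (w i) ≤ ∑ w ∈ S, 2 ^ (-(n * θ)) * ∏ i, empDist w (w i) :=
        Finset.sum_le_sum fun w hw => by
          rw [prod_comp_eq_two_rpow_mul hq hn]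
          gcongr
          · exact hemp w
          · exact one_le_two
          · exact hS w hw
    _ ≤ 2 ^ (-(n * θ)) * ∑ w : Fin n → α, ∏ i, empDist w (w i) := by
        rw [← Finset.mul_sum]
        gcongr
        exacts [fun w _ _ => hemp w, Finset.subset_univ S]
    _ ≤ ((n : ℝ) + 1) ^ Fintype.card α * 2 ^ (-(n * θ)) := by
        rw [mul_comm]
        gcongr
        exact sum_prod_empDist_le hn

end EmpiricalDistribution

section Achievability

variable {U V X Y : Type} [Fintype U] [Fintype V] [Fintype X] [Fintype Y]
  {P Q : U × V → ℝ} {Γ : X → Y → ℝ} {pU : U → ℝ} {pV : V → ℝ} {δ θ : ℝ} {n k : ℕ}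

lemma exists_forall_le_klDiv2_of_lt_minDivMarg (hQ : IsPMF Q) (hQpos : ∀ w, 0 < Q w)
    (hθ : θ < minDivMarg Q pU pV) :
    ∃ δ > 0, ∀ π, IsPMF π → dist (margU π) pU ≤ δ → dist (margV π) pV ≤ δ → θ ≤ klDiv2 π Q := by
  let marg (π : U × V → ℝ) : (U → ℝ) × (V → ℝ) := (margU π, margV π)
  have hmarg : Continuous marg := by
    unfold marg margU margV
    fun_prop
  have hcompact : IsCompact (stdSimplex ℝ (U × V) ∩ {π | klDiv2 π Q ≤ θ}) :=
    (isCompact_stdSimplex ℝ _).inter_right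
      (isClosed_le (continuous_klDiv2_left hQpos) continuous_const)
  have hnotMem : (pU, pV) ∉ marg '' (stdSimplex ℝ (U × V) ∩ {π | klDiv2 π Q ≤ θ}) := by
    rintro ⟨π, ⟨hπ, hle⟩, hp⟩
    obtain ⟨rfl, rfl⟩ := Prod.mk.inj hp
    exact hle.not_gt (hθ.trans_le (minDivMarg_le_klDiv2 hQ hQpos hπ))
  obtain ⟨δ, hδ, hball⟩ := Metric.nhds_basis_closedBall.mem_iff.1
    ((hcompact.image hmarg).isClosed.isOpen_compl.mem_nhds hnotMem)
  refine ⟨δ, hδ, fun π hπ hU hV => le_of_not_gt fun hlt => ?_⟩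
  exact hball (Metric.mem_closedBall.2 (max_le hU hV)) ⟨π, ⟨hπ, hlt.le⟩, rfl⟩

open Classical in
/-- The joint sequences whose first component is typical for `pU` and whose second component is
typical for `pV`; no joint typicality is required. -/
noncomputable def marginallyTypical (pU : U → ℝ) (pV : V → ℝ) (δ : ℝ) (n : ℕ) :
    Finset (Fin n → U × V) :=
  {w | IsTypical pU δ (fun i => (w i).1) ∧ IsTypical pV δ fun i => (w i).2}

lemma one_sub_le_sum_marginallyTypical (hP : IsPMF P) (hδ : 0 < δ) (hn : n ≠ 0) :
    1 - 2 / (n * δ ^ 2) ≤ ∑ w ∈ marginallyTypical (margU P) (margV P) δ n, ∏ i, P (w i) := by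
  classical
  have hunion (u : Fin n → U) (v : Fin n → V) : (1 : ℝ) -
      (if IsTypical (margU P) δ u then 0 else 1) - (if IsTypical (margV P) δ v then 0 else 1) ≤
      if IsTypical (margU P) δ u ∧ IsTypical (margV P) δ v then 1 else 0 := by
    by_cases hu : IsTypical (margU P) δ u <;> by_cases hv : IsTypical (margV P) δ v <;>
      simp [hu, hv]
  calc 1 - 2 / (n * δ ^ 2)
      ≤ 1 - ∑ u : Fin n → U, (∏ i, margU P (u i)) * (if IsTypical (margU P) δ u then 0 else 1)
          - ∑ v : Fin n → V, (∏ i, margV P (v i)) * (if IsTypical (margV P) δ v then 0 else 1) := by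
        have hU := sum_prod_mul_not_isTypical_le (isPMF_margU hP) hδ hn
        have hV := sum_prod_mul_not_isTypical_le (isPMF_margV hP) hδ hn
        rw [← one_add_one_eq_two, add_div]
        linarith
    _ = ∑ u : Fin n → U, ∑ v : Fin n → V, (∏ i, P (u i, v i)) *
          (1 - (if IsTypical (margU P) δ u then 0 else 1) -
            (if IsTypical (margV P) δ v then 0 else 1)) := by
        simp only [mul_sub, mul_one, Finset.sum_sub_distrib, sum_sum_prod_eq_one hP]
        rw [← sum_sum_prod_mul_fst, ← sum_sum_prod_mul_snd]
    _ ≤ ∑ u : Fin n → U, ∑ v : Fin n → V, (∏ i, P (u i, v i)) *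
          if IsTypical (margU P) δ u ∧ IsTypical (margV P) δ v then 1 else 0 := by
        gcongr with u _ v
        · exact Finset.prod_nonneg fun i _ => hP.1 _
        · exact hunion u v
    _ = ∑ w ∈ marginallyTypical (margU P) (margV P) δ n, ∏ i, P (w i) := by
        simp only [mul_ite, mul_one, mul_zero, marginallyTypical, Finset.sum_filter,
          sum_pi_prod_eq (U := U) (V := V)]

lemma sum_marginallyTypical_le (hQpos : ∀ w, 0 < Q w) (hn : n ≠ 0)
    (hθ : ∀ π, IsPMF π → dist (margU π) pU ≤ δ → dist (margV π) pV ≤ δ → θ ≤ klDiv2 π Q) :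
    ∑ w ∈ marginallyTypical pU pV δ n, ∏ i, Q (w i) ≤
      ((n : ℝ) + 1) ^ Fintype.card (U × V) * 2 ^ (-(n * θ)) := by
  classical
  refine sanov_upper_bound hQpos hn fun w hw => ?_
  obtain ⟨hU, hV⟩ := (Finset.mem_filter.1 hw).2
  exact hθ _ (isPMF_empDist hn w) (by rwa [margU_empDist]) (by rwa [margV_empDist])

open Classical in
/-- The encoder that repeats `x₀` if its observation is typical for `pU`, and `x₁` otherwise. -/
noncomputable def typicalEncoder (pU : U → ℝ) (δ : ℝ) (x₀ x₁ : X) (u : Fin n → U) (_ : Fin k) : X :=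
  if IsTypical pU δ u then x₀ else x₁

open Classical in
/-- The decoder that accepts `H = 0`, i.e. returns `false`, iff its observation is typical for `pV`
and the symbol `ystar` occurs in the channel output. -/
noncomputable def typicalDecoder (pV : V → ℝ) (δ : ℝ) (ystar : Y) (v : Fin n → V)
    (y : Fin k → Y) : Bool :=
  decide ¬(IsTypical pV δ v ∧ ∃ j, y j = ystar)

open Classical in
lemma sum_prod_mul_exists_eq {p : Y → ℝ} (hp : IsPMF p) (b : Y) (k : ℕ) :
    ∑ y : Fin k → Y, (∏ j, p (y j)) * (if ∃ j, y j = b then 1 else 0) = 1 - (1 - p b) ^ k := by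
  have hone : ∑ y : Fin k → Y, ∏ j, p (y j) = 1 := (IsPMF.pi fun _ => hp).2
  have hnever : ∑ y : Fin k → Y with ¬∃ j, y j = b, ∏ j, p (y j) = (1 - p b) ^ k := by
    have hfilter : ({y | ¬∃ j, y j = b} : Finset (Fin k → Y)) =
        Fintype.piFinset fun _ => Finset.univ.erase b := by
      ext y
      simp
    rw [hfilter, ← Finset.prod_univ_sum, Finset.prod_const, Finset.card_fin,
      Finset.sum_erase_eq_sub (Finset.mem_univ b), hp.2]
  simp only [mul_ite, mul_one, mul_zero, ← Finset.sum_filter]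
  linarith [Finset.sum_filter_add_sum_filter_not Finset.univ
    (fun y : Fin k → Y => ∃ j, y j = b) fun y => ∏ j, p (y j)]

lemma decProb_typical_false (hΓ : ∀ x, IsPMF (Γ x)) {x₀ x₁ : X} {ystar : Y}
    (h₁ : Γ x₁ ystar = 0) (R : U × V → ℝ) (pU : U → ℝ) (pV : V → ℝ) (δ : ℝ) (n k : ℕ) :
    decProb R Γ (n := n) (k := k) (typicalEncoder pU δ x₀ x₁) (typicalDecoder pV δ ystar) false =
      (∑ w ∈ marginallyTypical pU pV δ n, ∏ i, R (w i)) * (1 - (1 - Γ x₀ ystar) ^ k) := by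
  classical
  have houtput (u : Fin n → U) (v : Fin n → V) : ∑ y : Fin k → Y,
      (∏ j, Γ (typicalEncoder pU δ x₀ x₁ u j) (y j)) *
        (if typicalDecoder pV δ ystar v y = false then 1 else 0) =
      if IsTypical pU δ u ∧ IsTypical pV δ v then 1 - (1 - Γ x₀ ystar) ^ k else 0 := by
    by_cases hv : IsTypical pV δ v
    · by_cases hu : IsTypical pU δ u <;>
        simp [typicalEncoder, typicalDecoder, hu, hv, sum_prod_mul_exists_eq (hΓ _), h₁,
          -mul_ite]
    · simp [typicalDecoder, hv]
  simp only [decProb_eq_sum_mul, houtput]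
  simp only [marginallyTypical, Finset.sum_mul, Finset.sum_filter, sum_pi_prod_eq (U := U) (V := V),
    mul_ite, mul_zero, ite_mul, zero_mul]

lemma tendsto_natSqrt_atTop : Tendsto Nat.sqrt atTop atTop :=
  tendsto_atTop_atTop.2 fun b => ⟨b * b, fun _ ha => Nat.le_sqrt.2 ha⟩

lemma tendsto_natSqrt_div_self : Tendsto (fun n : ℕ => (Nat.sqrt n : ℝ) / n) atTop (𝓝 0) := by
  refine squeeze_zero' (.of_forall fun n => by positivity) ?_
    (tendsto_inv_atTop_zero.comp (tendsto_natCast_atTop_atTop.comp tendsto_natSqrt_atTop))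
  filter_upwards [eventually_gt_atTop 0] with n hn
  have hpos : (0 : ℝ) < Nat.sqrt n := by exact_mod_cast Nat.sqrt_pos.2 hn
  have hsqrt : (Nat.sqrt n : ℝ) * Nat.sqrt n ≤ n := by exact_mod_cast Nat.sqrt_le n
  exact (div_le_div_of_nonneg_left hpos.le (mul_pos hpos hpos) hsqrt).trans_eq
    (div_self_mul_self' _)

lemma tendsto_decProb_typical_true (hP : IsPMF P) (hΓ : ∀ x, IsPMF (Γ x)) {x₀ x₁ : X} {ystar : Y}
    (h₀ : 0 < Γ x₀ ystar) (h₁ : Γ x₁ ystar = 0) (hδ : 0 < δ) {k : ℕ → ℕ}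
    (hk : Tendsto k atTop atTop) :
    Tendsto (fun n => decProb P Γ (n := n) (k := k n) (typicalEncoder (margU P) δ x₀ x₁)
      (typicalDecoder (margV P) δ ystar) true) atTop (𝓝 0) := by
  have hmiss : Tendsto (fun n => (1 - Γ x₀ ystar) ^ k n) atTop (𝓝 0) :=
    (tendsto_pow_atTop_nhds_zero_of_lt_one (sub_nonneg.2 ((hΓ x₀).le_one ystar))
      (sub_lt_self 1 h₀)).comp hk
  have hatypical : Tendsto (fun n : ℕ => 2 / (n * δ ^ 2)) atTop (𝓝 0) :=
    tendsto_const_nhds.div_atTop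
      (tendsto_natCast_atTop_atTop.atTop_mul_const (by positivity))
  have hlower : Tendsto (fun n : ℕ => (1 - 2 / (n * δ ^ 2)) * (1 - (1 - Γ x₀ ystar) ^ k n)) atTop
      (𝓝 1) := by
    simpa using (hatypical.const_sub 1).mul (hmiss.const_sub 1)
  have hfalse : Tendsto (fun n => decProb P Γ (n := n) (k := k n)
      (typicalEncoder (margU P) δ x₀ x₁) (typicalDecoder (margV P) δ ystar) false) atTop (𝓝 1) := by
    refine tendsto_of_tendsto_of_tendsto_of_le_of_le' hlower tendsto_const_nhds ?_
      (.of_forall fun n => decProb_le_one hP hΓ)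
    filter_upwards [eventually_ne_atTop 0] with n hn
    rw [decProb_typical_false hΓ h₁]
    gcongr
    · exact sub_nonneg.2 (pow_le_one₀ (sub_nonneg.2 ((hΓ x₀).le_one ystar)) (by linarith))
    · exact one_sub_le_sum_marginallyTypical hP hδ hn
  have htrue (n : ℕ) := eq_sub_of_add_eq' (decProb_false_add_true (n := n) (k := k n)
    (f := typicalEncoder (margU P) δ x₀ x₁) (g := typicalDecoder (margV P) δ ystar) hP hΓ)
  simpa only [htrue, sub_self] using hfalse.const_sub 1

lemma decProb_typical_false_le (hQpos : ∀ w, 0 < Q w) (hΓ : ∀ x, IsPMF (Γ x)) {x₀ x₁ : X}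
    {ystar : Y} (h₁ : Γ x₁ ystar = 0) (hn : n ≠ 0)
    (hθ : ∀ π, IsPMF π → dist (margU π) pU ≤ δ → dist (margV π) pV ≤ δ → θ ≤ klDiv2 π Q) :
    decProb Q Γ (n := n) (k := k) (typicalEncoder pU δ x₀ x₁) (typicalDecoder pV δ ystar) false ≤
      ((n : ℝ) + 1) ^ Fintype.card (U × V) * 2 ^ (-(n * θ)) := by
  rw [decProb_typical_false hΓ h₁]
  refine (mul_le_of_le_one_right ?_ ?_).trans (sum_marginallyTypical_le hQpos hn hθ)
  · exact Finset.sum_nonneg fun w _ => Finset.prod_nonneg fun i _ => (hQpos _).le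
  · exact sub_le_self 1 (pow_nonneg (sub_nonneg.2 ((hΓ x₀).le_one ystar)) k)

lemma eventually_pow_mul_two_rpow_neg_le {θ' : ℝ} (h : θ < θ') (c : ℕ) :
    ∀ᶠ n : ℕ in atTop, ((n : ℝ) + 1) ^ c * 2 ^ (-(n * θ')) ≤ (2 : ℝ) ^ (-(n * θ)) := by
  set ρ : ℝ := 2 ^ (θ - θ')
  have hρ0 : 0 < ρ := Real.rpow_pos_of_pos two_pos _
  have hρ1 : ρ < 1 := Real.rpow_lt_one_of_one_lt_of_neg one_lt_two (sub_neg.2 h)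
  have hlim : Tendsto (fun n : ℕ => ((n + 1 : ℕ) : ℝ) ^ c * ρ ^ (n + 1)) atTop (𝓝 0) :=
    (tendsto_pow_const_mul_const_pow_of_abs_lt_one c (by rwa [abs_of_pos hρ0])).comp
      (tendsto_add_atTop_nat 1)
  filter_upwards [hlim.eventually_lt_const hρ0] with n hn
  have hle : ((n : ℝ) + 1) ^ c * ρ ^ n ≤ 1 := by
    push_cast at hn
    rw [pow_succ, ← mul_assoc, mul_lt_iff_lt_one_left hρ0] at hn
    exact hn.le
  have hsplit : (2 : ℝ) ^ (-(n * θ')) = ρ ^ n * 2 ^ (-(n * θ)) := by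
    rw [← Real.rpow_mul_natCast two_pos.le, ← Real.rpow_add two_pos]
    ring_nf
  rw [hsplit, ← mul_assoc]
  exact mul_le_of_le_one_left (Real.rpow_nonneg two_pos.le _) hle

lemma mem_steinSetSublin_of_tendsto [Nonempty Y] (hP : IsPMF P) (hQpos : ∀ w, 0 < Q w)
    (hΓ : ∀ x, IsPMF (Γ x)) {ε : ℝ} (hε : 0 ≤ ε) (hθ : 0 < θ) {k : ℕ → ℕ}
    (hk : Tendsto k atTop atTop) (hkn : Tendsto (fun n => (k n : ℝ) / n) atTop (𝓝 0))
    {f : ∀ n, (Fin n → U) → Fin (k n) → X} {g : ∀ n, (Fin n → V) → (Fin (k n) → Y) → Bool}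
    (hα : Tendsto (fun n => decProb P Γ (f n) (g n) true) atTop (𝓝 0))
    (hβ : ∀ᶠ n : ℕ in atTop, decProb Q Γ (f n) (g n) false ≤ (2 : ℝ) ^ (-(n * θ))) :
    θ ∈ steinSetSublin P Q Γ ε := by
  refine ⟨hθ, k, f, g, tendsto_natCast_atTop_atTop.comp hk, hkn, hα.limsup_eq.trans_le hε, ?_⟩
  obtain ⟨d, hd⟩ := exists_gt (minDivMarg Q (margU P) (margV P))
  have hconverse : ∀ᶠ n : ℕ in atTop, (2 : ℝ) ^ (-(n * d)) ≤ decProb Q Γ (f n) (g n) false := by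
    filter_upwards [hα.eventually_le_const one_half_pos,
      eventually_two_rpow_neg_le_decProb hP hQpos hΓ hd hkn f g one_half_pos] with n hn hconv
    exact hconv (by linarith [decProb_false_add_true (f := f n) (g := g n) hP hΓ])
  refine le_liminf_of_le (IsBoundedUnder.isCoboundedUnder_ge ⟨d, eventually_map.2 ?_⟩) ?_
  · filter_upwards [hconverse, eventually_ne_atTop 0] with n hle hn
    exact (neg_one_div_mul_logb_le_iff hn ((Real.rpow_pos_of_pos two_pos _).trans_le hle)).2 hle
  · filter_upwards [hconverse, hβ, eventually_ne_atTop 0] with n hle hge hn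
    exact (le_neg_one_div_mul_logb_iff hn ((Real.rpow_pos_of_pos two_pos _).trans_le hle)).2 hge

theorem mem_steinSetSublin_of_lt_minDivMarg (hP : IsPMF P) (hQ : IsPMF Q) (hQpos : ∀ w, 0 < Q w)
    (hΓ : ∀ x, IsPMF (Γ x)) {x₀ x₁ : X} {ystar : Y} (h₀ : 0 < Γ x₀ ystar) (h₁ : Γ x₁ ystar = 0)
    {ε : ℝ} (hε : 0 ≤ ε) (hθ0 : 0 < θ) (hθ : θ < minDivMarg Q (margU P) (margV P)) :
    θ ∈ steinSetSublin P Q Γ ε := by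
  have : Nonempty Y := ⟨ystar⟩
  obtain ⟨θ', hθθ', hθ'⟩ := exists_between hθ
  obtain ⟨δ, hδ, hdiv⟩ := exists_forall_le_klDiv2_of_lt_minDivMarg hQ hQpos hθ'
  refine mem_steinSetSublin_of_tendsto hP hQpos hΓ hε hθ0 tendsto_natSqrt_atTop
    tendsto_natSqrt_div_self
    (tendsto_decProb_typical_true hP hΓ h₀ h₁ hδ tendsto_natSqrt_atTop) ?_
  filter_upwards [eventually_ne_atTop 0,
    eventually_pow_mul_two_rpow_neg_le hθθ' (Fintype.card (U × V))] with n hn hpoly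
  exact (decProb_typical_false_le hQpos hΓ h₁ hn hdiv).trans hpoly

end Achievability

lemma sSup_eq_of_Ioo_subset_of_subset_Ioc {m : ℝ} (hm : 0 ≤ m) {S : Set ℝ}
    (hlower : Set.Ioo 0 m ⊆ S) (hupper : S ⊆ Set.Ioc 0 m) : sSup S = m := by
  obtain rfl | hm := hm.eq_or_lt
  · rw [Set.Ioc_self, Set.subset_empty_iff] at hupper
    rw [hupper, Real.sSup_empty]
  · refine le_antisymm (csSup_le ((Set.nonempty_Ioo.2 hm).mono hlower) fun θ hθ => (hupper hθ).2) ?_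
    exact (csSup_Ioo hm).symm.trans_le
      (csSup_le_csSup (bddAbove_Ioc.mono hupper) (Set.nonempty_Ioo.2 hm) hlower)

/-- If the DMC admits inputs `x₀, x₁` and an output `y*` with
`Γ(y*|x₀) > 0` and `Γ(y*|x₁) = 0`, then for every `ε ∈ [0,1)` the Stein-exponent
with a sublinear number of channel uses equals
`min { D(π_{UV} ‖ Q_{UV}) : π_U = P_U, π_V = P_V }`. -/
theorem stein_sublinear_partially_connected
    {U V X Y : Type} [Fintype U] [Fintype V] [Fintype X] [Fintype Y]
    (P Q : U × V → ℝ) (hP : IsPMF P) (hQ : IsPMF Q) (hQpos : ∀ p : U × V, 0 < Q p)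
    (Γ : X → Y → ℝ) (hΓ : ∀ x, IsPMF (Γ x))
    (x₀ x₁ : X) (ystar : Y)
    (h₀ : 0 < Γ x₀ ystar) (h₁ : Γ x₁ ystar = 0)
    (ε : ℝ) (hε0 : 0 ≤ ε) (hε1 : ε < 1) :
    sSup (steinSetSublin P Q Γ ε) = minDivMarg Q (margU P) (margV P) := by
  have : Nonempty Y := ⟨ystar⟩
  refine sSup_eq_of_Ioo_subset_of_subset_Ioc (minDivMarg_nonneg hQ hQpos _ _) ?achievability
    ?converse
  case achievability =>
    exact fun θ hθ => mem_steinSetSublin_of_lt_minDivMarg hP hQ hQpos hΓ h₀ h₁ hε0 hθ.1 hθ.2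
  case converse =>
    exact fun θ hθ => ⟨hθ.1, le_minDivMarg_of_mem_steinSetSublin hP hQ hQpos hΓ hε1 hθ⟩
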